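/- Let D be a finite nonempty index set, partitioned into a collection Δ of nonempty domains δ ⊆ D, with positive weights w_δ > 0 and w_d > 0, and let d_C(x,y) = Σ_{δ∈Δ} w_δ · √(Σ_{d∈δ} w_d·(x_d − y_d)²). Let C₁, …, C_m be nonempty axis-parallel cuboids in ℝ^D (each of the form {x : ∀d, p⁻_d ≤ x_d ≤ p⁺_d} with finite p⁻ ≤ p⁺) such that P := ⋂_{i=1}^m C_i is nonempty, and let S := ⋃_{i=1}^m C_i. Fix μ₀ ∈ (0,1] and c > 0 and define μ(x) = μ₀ · max_{y∈S} e^{−c·d_C(x,y)}. Then for every α ∈ (0,1], the α-cut {x ∈ ℝ^D : μ(x) ≥ α} is either empty or star-shaped under d_C with respect to P. -/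

import Mathlib

open Finset

/-!
If `y` lies between `p` and `z` for a positively weighted sum of metrics, then it lies between them
for every summand, hence, by strict convexity, on the segment from `p` to `z` in every block, at a
parameter `t j` that depends on the block `j`. Contracting `s ∈ S` towards `p` by the same
parameters gives a point `s'` whose distance to `y` is at most that of `s` to `z`, and `s'` stays
in `S` because a cuboid containing `p` contains all such blockwise contractions of its points. So
`y` is at least as close to `S` as `z` is, and its membership is at least as large.
-/

section CombinedDist

variable {X ι : Type*} [Fintype ι]

/-- The combined metric of conceptual spaces: the weighted sum of the distances in the blocks, where
`f j x` is the block `j` of the point `x`. -/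
noncomputable def combinedDist {Q : ι → Type*} [∀ j, Dist (Q j)] (w : ι → ℝ)
    (f : ∀ j, X → Q j) (x y : X) : ℝ :=
  ∑ j, w j * dist (f j x) (f j y)

variable {Q : ι → Type*} [∀ j, PseudoMetricSpace (Q j)] {w : ι → ℝ} {f : ∀ j, X → Q j}

lemma combinedDist_self (x : X) : combinedDist w f x x = 0 := by
  simp [combinedDist]

lemma combinedDist_nonneg (hw : ∀ j, 0 ≤ w j) (x y : X) : 0 ≤ combinedDist w f x y :=
  sum_nonneg fun j _ => mul_nonneg (hw j) dist_nonneg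

lemma dist_add_dist_eq_of_combinedDist_add_eq (hw : ∀ j, 0 < w j) {x y z : X}
    (h : combinedDist w f x y + combinedDist w f y z = combinedDist w f x z) (j : ι) :
    dist (f j x) (f j y) + dist (f j y) (f j z) = dist (f j x) (f j z) := by
  have triangle (j : ι) (_ : j ∈ univ) : w j * dist (f j x) (f j z) ≤
      w j * (dist (f j x) (f j y) + dist (f j y) (f j z)) :=
    mul_le_mul_of_nonneg_left (dist_triangle _ _ _) (hw j).le
  have sum_eq : ∑ j, w j * dist (f j x) (f j z) =
      ∑ j, w j * (dist (f j x) (f j y) + dist (f j y) (f j z)) := by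
    simp only [mul_add, sum_add_distrib]
    exact h.symm
  exact mul_left_cancel₀ (hw j).ne' ((sum_eq_sum_iff_of_le triangle).1 sum_eq j (mem_univ j)).symm

end CombinedDist

lemma dist_lineMap_lineMap_le_of_mem_Icc {V Q : Type*} [SeminormedAddCommGroup V] [NormedSpace ℝ V]
    [PseudoMetricSpace Q] [NormedAddTorsor V Q] (p a b : Q) {t : ℝ} (ht : t ∈ Set.Icc (0 : ℝ) 1) :
    dist (AffineMap.lineMap p a t) (AffineMap.lineMap p b t) ≤ dist a b := by
  rw [dist_eq_norm_vsub V, AffineMap.lineMap_vsub_lineMap, vsub_self,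
    AffineMap.lineMap_apply_module, smul_zero, zero_add, norm_smul, Real.norm_of_nonneg ht.1,
    ← dist_eq_norm_vsub V]
  exact mul_le_of_le_one_left dist_nonneg ht.2

section BlockStarConvex

variable {X ι : Type*} {V Q : ι → Type*}

section Affine

variable [∀ j, AddCommGroup (V j)] [∀ j, Module ℝ (V j)] [∀ j, AddTorsor (V j) (Q j)]

/-- Star-convexity of `S` at `p` with an independent parameter in each block: every blockwise
contraction of a point of `S` towards `p` is realised in `S`. Points enter only through their blocks
`f j`, so that the points themselves need not form an affine space. -/
def BlockStarConvex (f : ∀ j, X → Q j) (p : X) (S : Set X) : Prop :=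
  ∀ s ∈ S, ∀ t : ι → ℝ, (∀ j, t j ∈ Set.Icc (0 : ℝ) 1) →
    ∃ s' ∈ S, ∀ j, f j s' = AffineMap.lineMap (f j p) (f j s) (t j)

lemma BlockStarConvex.iUnion {f : ∀ j, X → Q j} {p : X} {κ : Sort*} {C : κ → Set X}
    (hC : ∀ i, BlockStarConvex f p (C i)) :
    BlockStarConvex f p (⋃ i, C i) := by
  intro s hs t ht
  obtain ⟨i, hsi⟩ := Set.mem_iUnion.1 hs
  obtain ⟨s', hs', hblocks⟩ := hC i s hsi t ht
  exact ⟨s', Set.mem_iUnion.2 ⟨i, hs'⟩, hblocks⟩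

end Affine

lemma BlockStarConvex.exists_combinedDist_le [Fintype ι] [∀ j, NormedAddCommGroup (V j)]
    [∀ j, NormedSpace ℝ (V j)] [∀ j, StrictConvexSpace ℝ (V j)] [∀ j, MetricSpace (Q j)]
    [∀ j, NormedAddTorsor (V j) (Q j)] {f : ∀ j, X → Q j} {p : X} {w : ι → ℝ}
    (hw : ∀ j, 0 < w j) {S : Set X} (hS : BlockStarConvex f p S) {y z : X}
    (hyz : combinedDist w f p y + combinedDist w f y z = combinedDist w f p z)
    {s : X} (hs : s ∈ S) :
    ∃ s' ∈ S, combinedDist w f y s' ≤ combinedDist w f z s := by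
  have between (j : ι) : Wbtw ℝ (f j p) (f j y) (f j z) :=
    dist_add_dist_eq_iff.1 (dist_add_dist_eq_of_combinedDist_add_eq hw hyz j)
  choose t ht hty using between
  obtain ⟨s', hs', hts'⟩ := hS s hs t ht
  refine ⟨s', hs', sum_le_sum fun j _ => mul_le_mul_of_nonneg_left ?_ (hw j).le⟩
  rw [← hty j, hts' j]
  exact dist_lineMap_lineMap_le_of_mem_Icc _ _ _ (ht j)

end BlockStarConvex

section Fuzzy

variable {X : Type*}

/-- The membership function of the fuzzy set with crisp core `S`, maximal membership `μ₀` and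
sensitivity `c`. The maximum is encoded as a real supremum, so the membership is `0` when `S` is
empty. -/
noncomputable def fuzzyMembership (d : X → X → ℝ) (S : Set X) (μ₀ c : ℝ) (x : X) : ℝ :=
  μ₀ * sSup ((fun y => Real.exp (-c * d x y)) '' S)

lemma fuzzyMembership_le_fuzzyMembership {d : X → X → ℝ} {S : Set X} {μ₀ c : ℝ} {y z : X}
    (hμ₀ : 0 ≤ μ₀) (hc : 0 ≤ c) (hd : ∀ s ∈ S, 0 ≤ d y s)
    (hyz : ∀ s ∈ S, ∃ s' ∈ S, d y s' ≤ d z s) :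
    fuzzyMembership d S μ₀ c z ≤ fuzzyMembership d S μ₀ c y := by
  have bounded : BddAbove ((fun s => Real.exp (-c * d y s)) '' S) := by
    refine ⟨1, Set.forall_mem_image.2 fun s hs => Real.exp_le_one_iff.2 ?_⟩
    exact mul_nonpos_of_nonpos_of_nonneg (neg_nonpos.2 hc) (hd s hs)
  refine mul_le_mul_of_nonneg_left (Real.sSup_le (Set.forall_mem_image.2 fun s hs => ?_) ?_) hμ₀
  · obtain ⟨s', hs', hle⟩ := hyz s hs
    calc Real.exp (-c * d z s) ≤ Real.exp (-c * d y s') :=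
          Real.exp_le_exp.2 (mul_le_mul_of_nonpos_left hle (neg_nonpos.2 hc))
      _ ≤ sSup ((fun s => Real.exp (-c * d y s)) '' S) :=
          le_csSup bounded (Set.mem_image_of_mem _ hs')
  · exact Real.sSup_nonneg (Set.forall_mem_image.2 fun s _ => (Real.exp_pos _).le)

/-- `A` is star-shaped under `d` with respect to `P`, betweenness being equality in the triangle
inequality. -/
def StarShapedWrt (d : X → X → ℝ) (P A : Set X) : Prop :=
  P ⊆ A ∧ ∀ p ∈ P, ∀ z ∈ A, ∀ y, d p y + d y z = d p z → y ∈ A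

theorem fuzzy_simple_star_shaped_set_is_star_shaped_general {ι : Type*} [Fintype ι]
    {V Q : ι → Type*} [∀ j, NormedAddCommGroup (V j)] [∀ j, NormedSpace ℝ (V j)]
    [∀ j, StrictConvexSpace ℝ (V j)] [∀ j, MetricSpace (Q j)] [∀ j, NormedAddTorsor (V j) (Q j)]
    {f : ∀ j, X → Q j} {w : ι → ℝ} (hw : ∀ j, 0 < w j) {P S : Set X}
    (hS : ∀ p ∈ P, BlockStarConvex f p S) {μ₀ c : ℝ} (hμ₀ : 0 ≤ μ₀) (hc : 0 ≤ c) (α : ℝ) :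
    {x | α ≤ fuzzyMembership (combinedDist w f) S μ₀ c x} = ∅ ∨
      StarShapedWrt (combinedDist w f) P
        {x | α ≤ fuzzyMembership (combinedDist w f) S μ₀ c x} := by
  have mem_of_between : ∀ p ∈ P, ∀ z ∈ {x | α ≤ fuzzyMembership (combinedDist w f) S μ₀ c x},
      ∀ y, combinedDist w f p y + combinedDist w f y z = combinedDist w f p z →
        α ≤ fuzzyMembership (combinedDist w f) S μ₀ c y := fun p hp z hz y hyz =>
    le_trans hz <| fuzzyMembership_le_fuzzyMembership hμ₀ hc
      (fun s _ => combinedDist_nonneg (fun j => (hw j).le) y s)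
      fun _ hs => (hS p hp).exists_combinedDist_le hw hyz hs
  refine (Set.eq_empty_or_nonempty _).imp_right fun ⟨z, hz⟩ => ⟨fun p hp => ?_, mem_of_between⟩
  exact mem_of_between p hp z hz p (by rw [combinedDist_self, zero_add])

end Fuzzy

section WeightedBlock

variable {D ι : Type*}

/-- The coordinates of `x` in the domain `{d | bl d = j}`, rescaled so that the weighted Euclidean
distance of that domain becomes the standard Euclidean distance. -/
noncomputable def weightedBlock (bl : D → ι) (wd : D → ℝ) (j : ι) (x : D → ℝ) :
    EuclideanSpace ℝ {d // bl d = j} :=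
  WithLp.toLp 2 fun d => Real.sqrt (wd d) * x d

lemma dist_weightedBlock [Fintype D] [DecidableEq ι] (bl : D → ι) {wd : D → ℝ}
    (hwd : ∀ d, 0 ≤ wd d) (j : ι) (x y : D → ℝ) :
    dist (weightedBlock bl wd j x) (weightedBlock bl wd j y) =
      Real.sqrt (∑ d ∈ univ.filter (fun d => bl d = j), wd d * (x d - y d) ^ 2) := by
  have dist_coord_sq (d : D) : dist (Real.sqrt (wd d) * x d) (Real.sqrt (wd d) * y d) ^ 2 =
      wd d * (x d - y d) ^ 2 := by
    rw [Real.dist_eq, sq_abs, ← mul_sub, mul_pow, Real.sq_sqrt (hwd d)]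
  rw [EuclideanSpace.dist_eq, ← sum_subtype_eq_sum_filter, subtype_univ]
  simp only [weightedBlock, dist_coord_sq]

lemma blockStarConvex_pi (bl : D → ι) (wd : D → ℝ) {p : D → ℝ} {K : D → Set ℝ}
    (hK : ∀ d, StarConvex ℝ (p d) (K d)) :
    BlockStarConvex (weightedBlock bl wd) p (Set.univ.pi K) := by
  intro s hs t ht
  refine ⟨fun d => p d + t (bl d) • (s d - p d), fun d hd => ?_, fun j => ?_⟩
  · exact (hK d).add_smul_sub_mem (hs d hd) (ht (bl d)).1 (ht (bl d)).2
  · ext ⟨d, rfl⟩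
    simp only [weightedBlock, AffineMap.lineMap_apply, vsub_eq_sub, vadd_eq_add, PiLp.add_apply,
      PiLp.smul_apply, PiLp.sub_apply, smul_eq_mul]
    ring

lemma blockStarConvex_iUnion_Icc {κ : Sort*} (bl : D → ι) (wd : D → ℝ) {a b : κ → D → ℝ}
    {p : D → ℝ} (hp : p ∈ ⋂ i, Set.Icc (a i) (b i)) :
    BlockStarConvex (weightedBlock bl wd) p (⋃ i, Set.Icc (a i) (b i)) := by
  refine BlockStarConvex.iUnion fun i => ?_
  have hpi : p ∈ Set.Icc (a i) (b i) := Set.mem_iInter.1 hp i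
  rw [← Set.pi_univ_Icc]
  exact blockStarConvex_pi bl wd fun d => (convex_Icc _ _).starConvex ⟨hpi.1 d, hpi.2 d⟩

end WeightedBlock

/-- A fuzzy simple star-shaped set is star-shaped: given cuboids
C₁,…,C_m with nonempty intersection P and union S, the membership function
μ(x) = μ₀ · max_{y∈S} e^{−c·d_C(x,y)} has all its α-cuts (for α ∈ (0,1]) either
empty or star-shaped under d_C with respect to P.  The partition of `D` into
nonempty domains is given by the fibers of the surjective block map
`bl : D → ι`. -/
theorem fuzzy_simple_star_shaped_set_is_star_shaped
    {D ι : Type*} [Fintype D] [Nonempty D] [Fintype ι] [DecidableEq ι]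
    (bl : D → ι) (hbl : Function.Surjective bl)
    (wδ : ι → ℝ) (wd : D → ℝ)
    (hwδ : ∀ j, 0 < wδ j) (hwd : ∀ d, 0 < wd d)
    (dC : (D → ℝ) → (D → ℝ) → ℝ)
    (hdC : ∀ x y, dC x y = ∑ j : ι, wδ j *
      Real.sqrt (∑ d ∈ univ.filter (fun d => bl d = j), wd d * (x d - y d) ^ 2))
    {m : ℕ} (pm pp : Fin m → D → ℝ) (hple : ∀ i d, pm i d ≤ pp i d)
    (C : Fin m → Set (D → ℝ))
    (hCdef : ∀ i, C i = {x : D → ℝ | ∀ d, pm i d ≤ x d ∧ x d ≤ pp i d})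
    (P : Set (D → ℝ)) (hP : P = ⋂ i, C i) (hPne : P.Nonempty)
    (S : Set (D → ℝ)) (hS : S = ⋃ i, C i)
    (μ₀ c : ℝ) (hμ₀ : μ₀ ∈ Set.Ioc (0 : ℝ) 1) (hc : 0 < c)
    (μ : (D → ℝ) → ℝ)
    (hμ : ∀ x, μ x = μ₀ * sSup ((fun y => Real.exp (-c * dC x y)) '' S)) :
    ∀ α ∈ Set.Ioc (0 : ℝ) 1,
      {x : D → ℝ | α ≤ μ x} = ∅ ∨
      (P ⊆ {x : D → ℝ | α ≤ μ x} ∧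
        ∀ p ∈ P, ∀ z ∈ {x : D → ℝ | α ≤ μ x}, ∀ y : D → ℝ,
          dC p y + dC y z = dC p z → α ≤ μ y) := by
  obtain rfl : dC = combinedDist wδ (weightedBlock bl wd) := by
    funext x y
    simp only [hdC, combinedDist, dist_weightedBlock bl fun d => (hwd d).le]
  obtain rfl : μ = fuzzyMembership (combinedDist wδ (weightedBlock bl wd)) S μ₀ c := funext hμ
  obtain rfl : C = fun i => Set.Icc (pm i) (pp i) := by
    funext i
    exact (hCdef i).trans (Set.ext fun x => forall_and)
  subst hP hS
  exact fun α _ => fuzzy_simple_star_shaped_set_is_star_shaped_general hwδ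
    (fun _ hp => blockStarConvex_iUnion_Icc bl wd hp) hμ₀.1.le hc.le α
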